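/- For every real α with 0 < α < 1/2, the sequence n ↦ α^n/d_n(α) converges to 0 as n → ∞. -/

import Mathlib

/-- `dpoly n α = ∑_{m=0}^{⌊n/2⌋} (-1)^m C(n-m, m) α^(2m)`. -/
noncomputable def dpoly (n : ℕ) (α : ℝ) : ℝ :=
  ∑ m ∈ Finset.range (n / 2 + 1), (-1 : ℝ) ^ m * (Nat.choose (n - m) m : ℝ) * α ^ (2 * m)

lemma dpoly_ext (n N : ℕ) (α : ℝ) (h : n / 2 + 1 ≤ N) : dpoly n α =
    ∑ m ∈ Finset.range N, (-1 : ℝ) ^ m * (Nat.choose (n - m) m : ℝ) * α ^ (2 * m) := by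
  unfold dpoly
  apply Finset.sum_subset
  · intro x hx
    simp only [Finset.mem_range] at *
    omega
  · intro x _ hx
    simp only [Finset.mem_range] at hx
    rw [Nat.choose_eq_zero_of_lt (by omega)]
    simp

lemma dpoly_rec (n : ℕ) (α : ℝ) : dpoly (n + 2) α = dpoly (n + 1) α - α ^ 2 * dpoly n α := by
  rw [dpoly_ext (n + 2) (n + 1 + 1) α (by omega), dpoly_ext (n + 1) (n + 1 + 1) α (by omega),
    dpoly_ext n (n + 1) α (by omega), Finset.sum_range_succ', Finset.sum_range_succ' _ (n + 1),
    Finset.mul_sum, add_sub_right_comm, ← Finset.sum_sub_distrib]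
  congr 1
  · apply Finset.sum_congr rfl
    intro m hm
    have hm' : m < n + 1 := Finset.mem_range.mp hm
    have h1 : n + 2 - (m + 1) = (n - m) + 1 := by omega
    have h2 : n + 1 - (m + 1) = n - m := by omega
    rw [h1, h2, Nat.choose_succ_succ]
    push_cast
    ring

lemma dpoly_growth (α : ℝ) (hα0 : 0 < α) (hα1 : α < 1 / 2) (n : ℕ) :
    (1 / 2 : ℝ) ^ n ≤ dpoly n α ∧ dpoly n α / 2 ≤ dpoly (n + 1) α := by
  induction n with
  | zero => norm_num [dpoly]
  | succ k ih =>
    obtain ⟨h1, h2⟩ := ih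
    have hp : (0 : ℝ) < (1 / 2) ^ k := by positivity
    refine ⟨by rw [pow_succ]; linarith, ?_⟩
    rw [dpoly_rec]
    have h3 : α ^ 2 ≤ 1 / 4 := by nlinarith
    have h4 : α ^ 2 * dpoly k α ≤ 1 / 4 * dpoly k α :=
      mul_le_mul_of_nonneg_right h3 (by linarith)
    linarith

theorem stmt10 (α : ℝ) (hα0 : 0 < α) (hα1 : α < 1 / 2) :
    Filter.Tendsto (fun n : ℕ => α ^ n / dpoly n α) Filter.atTop (nhds 0) := by
  have hlim : Filter.Tendsto (fun n : ℕ => (α / (1 / 2)) ^ n) Filter.atTop (nhds 0) :=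
    tendsto_pow_atTop_nhds_zero_of_lt_one (by positivity) (by rw [div_lt_one] <;> linarith)
  refine squeeze_zero (fun n => ?_) (fun n => ?_) hlim
  · have h := (dpoly_growth α hα0 hα1 n).1
    have hp : (0 : ℝ) < (1 / 2) ^ n := by positivity
    exact div_nonneg (by positivity) (by linarith)
  · rw [div_pow]
    exact div_le_div_of_nonneg_left (by positivity) (by positivity) (dpoly_growth α hα0 hα1 n).1
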